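/- Fix α > 0 and δ ∈ (0,1). Under assumptions (A1)–(A6), with probability at least 1−δ over the draw of the datasets D and D0, the output (ŵ, π̂) of PRO-RL satisfies J(π*_α) − J(π̂) ≤ (1/(1−γ))·E_{s∼d*_α}[‖π*_α(·|s) − π̂(·|s)‖₁] ≤ (2/(1−γ))·‖ŵ − w*_α‖_{2,d^D} ≤ (4/(1−γ))·√(ε_stat/(α·M_f)). -/

import Mathlib

open MeasureTheory
open scoped BigOperators ENNReal

namespace ProRL

/-- The discrete measure on a type induced by a real-valued weight function. -/
noncomputable def discMeasure {X : Type*} [MeasurableSpace X] (p : X → ℝ) : Measure X :=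
  Measure.sum fun x => ENNReal.ofReal (p x) • Measure.dirac x

variable {S A : Type*} [Fintype S] [Fintype A]

/-- The `t`-step state-action distribution of policy `π` started from `μ0`. -/
noncomputable def saDist (P : S → A → S → ℝ) (μ0 : S → ℝ) (π : S → A → ℝ) :
    ℕ → S → A → ℝ
  | 0 => fun s a => μ0 s * π s a
  | t + 1 => fun s a =>
      (∑ s' : S, ∑ a' : A, saDist P μ0 π t s' a' * P s' a' s) * π s a

/-- The discounted state-action occupancy `d^π(s,a)`. -/
noncomputable def occ (P : S → A → S → ℝ) (μ0 : S → ℝ) (γ : ℝ) (π : S → A → ℝ)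
    (s : S) (a : A) : ℝ :=
  (1 - γ) * ∑' t : ℕ, γ ^ t * saDist P μ0 π t s a

/-- The (normalized) expected discounted return `J(π) = E_{d^π}[r]`. -/
noncomputable def Jret (P : S → A → S → ℝ) (r : S → A → ℝ) (μ0 : S → ℝ) (γ : ℝ)
    (π : S → A → ℝ) : ℝ :=
  ∑ s : S, ∑ a : A, occ P μ0 γ π s a * r s a

/-- `π` is a (stationary, stochastic) policy. -/
def IsPolicy (π : S → A → ℝ) : Prop :=
  (∀ s a, 0 ≤ π s a) ∧ ∀ s, ∑ a : A, π s a = 1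

/-- The Bellman residual `e_v(s,a) = r(s,a) + γ ∑_{s'} P(s'|s,a) v(s') − v(s)`. -/
noncomputable def eV (P : S → A → S → ℝ) (r : S → A → ℝ) (γ : ℝ) (v : S → ℝ)
    (s : S) (a : A) : ℝ :=
  r s a + γ * ∑ s' : S, P s a s' * v s' - v s

/-- The population Lagrangian `L_α(v,w)`. -/
noncomputable def Lag (P : S → A → S → ℝ) (r : S → A → ℝ) (μ0 : S → ℝ) (γ : ℝ)
    (dD : S → A → ℝ) (f : ℝ → ℝ) (α : ℝ) (v : S → ℝ) (w : S → A → ℝ) : ℝ :=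
  (1 - γ) * ∑ s : S, μ0 s * v s
    - α * ∑ s : S, ∑ a : A, dD s a * f (w s a)
    + ∑ s : S, ∑ a : A, dD s a * (w s a * eV P r γ v s a)

/-- The empirical Lagrangian `L̂_α(v,w)` built from the transition dataset `D`
(`D i = ((sᵢ,aᵢ), s'ᵢ)`, with `rᵢ = r sᵢ aᵢ`) and initial-state dataset `D0`. -/
noncomputable def empLag (r : S → A → ℝ) (γ : ℝ) (f : ℝ → ℝ) (α : ℝ) {n n0 : ℕ}
    (D : Fin n → (S × A) × S) (D0 : Fin n0 → S) (v : S → ℝ) (w : S → A → ℝ) : ℝ :=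
  (1 - γ) * ((n0 : ℝ)⁻¹ * ∑ j : Fin n0, v (D0 j))
    - α * ((n : ℝ)⁻¹ * ∑ i : Fin n, f (w (D i).1.1 (D i).1.2))
    + (n : ℝ)⁻¹ * ∑ i : Fin n,
        w (D i).1.1 (D i).1.2 *
          (r (D i).1.1 (D i).1.2 + γ * v (D i).2 - v (D i).1.1)

/-- Per-state normalization of a state-action weight into a policy
(uniform where the state marginal is not positive). -/
noncomputable def normPolicy (d : S → A → ℝ) (s : S) (a : A) : ℝ :=
  if 0 < ∑ a' : A, d s a' then d s a / ∑ a' : A, d s a'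
  else (Fintype.card A : ℝ)⁻¹

/-- Policy extraction from a density ratio `w` and a behavior policy `piD`
(uniform where the normalizer vanishes). -/
noncomputable def extractPolicy (piD w : S → A → ℝ) (s : S) (a : A) : ℝ :=
  if 0 < ∑ a' : A, w s a' * piD s a' then
    w s a * piD s a / ∑ a' : A, w s a' * piD s a'
  else (Fintype.card A : ℝ)⁻¹

/-- Behavior policy `π_D(a|s)` obtained from the data distribution `d^D`. -/
noncomputable def behPolicy (dD : S → A → ℝ) : S → A → ℝ := normPolicy dD

/-- The state-action measure `d(s,a) = w(s,a)·d^D(s,a)`. -/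
noncomputable def dstar (dD w : S → A → ℝ) : S → A → ℝ := fun s a => w s a * dD s a

/-- The weighted `L²(d^D)` norm of a state-action function. -/
noncomputable def l2nrm (dD g : S → A → ℝ) : ℝ :=
  Real.sqrt (∑ s : S, ∑ a : A, dD s a * g s a ^ 2)

/-- `‖π(·|s) − π'(·|s)‖₁`. -/
noncomputable def l1Pol (π π' : S → A → ℝ) (s : S) : ℝ := ∑ a : A, |π s a - π' s a|

/-- `E_{s ∼ d}[‖π(·|s) − π'(·|s)‖₁]` where `d` is a state-action distribution. -/
noncomputable def expL1 (d π π' : S → A → ℝ) : ℝ :=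
  ∑ s : S, (∑ a : A, d s a) * l1Pol π π' s

/-- The statistical error term `ε_stat`. -/
noncomputable def epsStat (γ α Bv Bf Bw Be δ : ℝ) (nV nW n n0 : ℕ) : ℝ :=
  (1 - γ) * Bv * Real.sqrt (2 * Real.log (4 * (nV : ℝ) / δ) / (n0 : ℝ))
    + (α * Bf + Bw * Be) *
        Real.sqrt (2 * Real.log (4 * ((nV : ℝ) * (nW : ℝ)) / δ) / (n : ℝ))

/-- The Bellman flow equations for a state-action measure `d`. -/
def BellmanFlow (P : S → A → S → ℝ) (μ0 : S → ℝ) (γ : ℝ) (d : S → A → ℝ) : Prop :=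
  ∀ s : S, ∑ a : A, d s a
    = (1 - γ) * μ0 s + γ * ∑ s' : S, ∑ a' : A, P s' a' s * d s' a'

/-- `(v,w)` is a saddle point of `max_{w ≥ 0} min_v L_α(v,w)`. -/
def IsSaddle (P : S → A → S → ℝ) (r : S → A → ℝ) (μ0 : S → ℝ) (γ : ℝ)
    (dD : S → A → ℝ) (f : ℝ → ℝ) (α : ℝ) (v : S → ℝ) (w : S → A → ℝ) : Prop :=
  (∀ s a, 0 ≤ w s a) ∧
  (∀ v' : S → ℝ, Lag P r μ0 γ dD f α v w ≤ Lag P r μ0 γ dD f α v' w) ∧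
  (∀ w' : S → A → ℝ, (∀ s a, 0 ≤ w' s a) →
    Lag P r μ0 γ dD f α v w' ≤ Lag P r μ0 γ dD f α v w)

/-- `(v,w)` is a saddle point of `max_{0 ≤ w ≤ Bw} min_v L_α(v,w)` (constrained LP). -/
def IsSaddleB (P : S → A → S → ℝ) (r : S → A → ℝ) (μ0 : S → ℝ) (γ : ℝ)
    (dD : S → A → ℝ) (f : ℝ → ℝ) (α Bw : ℝ) (v : S → ℝ) (w : S → A → ℝ) : Prop :=
  (∀ s a, 0 ≤ w s a ∧ w s a ≤ Bw) ∧
  (∀ v' : S → ℝ, Lag P r μ0 γ dD f α v w ≤ Lag P r μ0 γ dD f α v' w) ∧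
  (∀ w' : S → A → ℝ, (∀ s a, 0 ≤ w' s a ∧ w' s a ≤ Bw) →
    Lag P r μ0 γ dD f α v w' ≤ Lag P r μ0 γ dD f α v w)

/-- `(vhat, what)` is an exact max-min point of the empirical Lagrangian over `V × W`:
`vhat ∈ argmin_{v ∈ V} L̂(v, what)` and `what ∈ argmax_{w ∈ W} min_{v ∈ V} L̂(v, w)`. -/
def IsProRLOutput (r : S → A → ℝ) (γ : ℝ) (f : ℝ → ℝ) (α : ℝ)
    (V : Finset (S → ℝ)) (W : Finset (S → A → ℝ)) {n n0 : ℕ}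
    (D : Fin n → (S × A) × S) (D0 : Fin n0 → S)
    (vhat : S → ℝ) (what : S → A → ℝ) : Prop :=
  vhat ∈ V ∧ what ∈ W ∧
  (∀ v ∈ V, empLag r γ f α D D0 vhat what ≤ empLag r γ f α D D0 v what) ∧
  ∀ w ∈ W, ∀ vw ∈ V,
    (∀ v ∈ V, empLag r γ f α D D0 vw w ≤ empLag r γ f α D D0 v w) →
      empLag r γ f α D D0 vw w ≤ empLag r γ f α D D0 vhat what

/-- Weight of a transition tuple `((s,a),s')` under `(s,a) ∼ d^D`, `s' ∼ P(·|s,a)`. -/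
noncomputable def tupleWeight (P : S → A → S → ℝ) (dD : S → A → ℝ)
    (x : (S × A) × S) : ℝ :=
  dD x.1.1 x.1.2 * P x.1.1 x.1.2 x.2

/-- The joint law of the transition dataset `D` (i.i.d. from `d^D ⊗ P`) and the
initial-state dataset `D0` (i.i.d. from `μ0`). -/
noncomputable def dataMeasure [MeasurableSpace S] [MeasurableSpace A]
    (P : S → A → S → ℝ) (dD : S → A → ℝ) (μ0 : S → ℝ) (n n0 : ℕ) :
    Measure ((Fin n → (S × A) × S) × (Fin n0 → S)) :=
  (Measure.pi fun _ : Fin n => discMeasure (tupleWeight P dD)).prod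
    (Measure.pi fun _ : Fin n0 => discMeasure μ0)

/-- The joint law of datasets `D1`, `D2` (both i.i.d. from `d^D ⊗ P`) and `D0`
(i.i.d. from `μ0`), used by PRO-RL-BC. -/
noncomputable def dataMeasure3 [MeasurableSpace S] [MeasurableSpace A]
    (P : S → A → S → ℝ) (dD : S → A → ℝ) (μ0 : S → ℝ) (n1 n2 n0 : ℕ) :
    Measure ((Fin n1 → (S × A) × S) × (Fin n2 → (S × A) × S) × (Fin n0 → S)) :=
  (Measure.pi fun _ : Fin n1 => discMeasure (tupleWeight P dD)).prod
    ((Measure.pi fun _ : Fin n2 => discMeasure (tupleWeight P dD)).prod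
      (Measure.pi fun _ : Fin n0 => discMeasure μ0))

/-- `v` is the optimal value function: it satisfies the Bellman optimality equation. -/
def IsOptValue [Nonempty A] (P : S → A → S → ℝ) (r : S → A → ℝ) (γ : ℝ)
    (v : S → ℝ) : Prop :=
  ∀ s : S, v s = Finset.univ.sup' Finset.univ_nonempty
    (fun a : A => r s a + γ * ∑ s' : S, P s a s' * v s')

/-- Basic assumptions on the MDP, the regularizer-free data, and the data distribution. -/
structure MDPAssumptions (P : S → A → S → ℝ) (r : S → A → ℝ) (μ0 : S → ℝ) (γ : ℝ)
    (dD : S → A → ℝ) : Prop where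
  P_nonneg : ∀ s a s', 0 ≤ P s a s'
  P_sum : ∀ s a, ∑ s' : S, P s a s' = 1
  r_nonneg : ∀ s a, 0 ≤ r s a
  r_le_one : ∀ s a, r s a ≤ 1
  γ_nonneg : 0 ≤ γ
  γ_lt_one : γ < 1
  μ0_pos : ∀ s, 0 < μ0 s
  μ0_sum : ∑ s : S, μ0 s = 1
  dD_nonneg : ∀ s a, 0 ≤ dD s a
  dD_sum : ∑ s : S, ∑ a : A, dD s a = 1

/-- Regularity of the regularizer `f`: continuously differentiable with derivative `f'`,
`M_f`-strongly convex, and with `|f'| ≤ Bf'`, `|f| ≤ Bf` on `[0, Bw]`. -/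
structure RegAssumptions (f f' : ℝ → ℝ) (Mf Bw Bf' Bf : ℝ) : Prop where
  deriv : ∀ x, HasDerivAt f (f' x) x
  strong : StrongConvexOn Set.univ Mf f
  Mf_pos : 0 < Mf
  f'_bdd : ∀ x, 0 ≤ x → x ≤ Bw → |f' x| ≤ Bf'
  f_bdd : ∀ x, 0 ≤ x → x ≤ Bw → |f x| ≤ Bf

/-- `w` is an optimal density ratio of the unregularized LP (the set `W*₀`). -/
def OptRatio (P : S → A → S → ℝ) (r : S → A → ℝ) (μ0 : S → ℝ) (γ : ℝ)
    (dD : S → A → ℝ) (w : S → A → ℝ) : Prop :=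
  (∀ s a, 0 ≤ w s a) ∧ BellmanFlow P μ0 γ (dstar dD w) ∧
  ∀ w' : S → A → ℝ, (∀ s a, 0 ≤ w' s a) → BellmanFlow P μ0 γ (dstar dD w') →
    ∑ s : S, ∑ a : A, dstar dD w' s a * r s a
      ≤ ∑ s : S, ∑ a : A, dstar dD w s a * r s a

/-- Two Bellman flows `d`, `e`, where `e` factors through the policy `π`, differ in total variation
by at most `1 / (1 - γ)` times the failure of `d` to factor through `π`. -/
theorem BellmanFlow.sum_abs_sub_le {P : S → A → S → ℝ} {μ0 : S → ℝ} {γ : ℝ}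
    (hP : ∀ s a s', 0 ≤ P s a s') (hP1 : ∀ s a, ∑ s', P s a s' = 1)
    (hγ0 : 0 ≤ γ) (hγ1 : γ < 1) {d e π : S → A → ℝ} (hd : BellmanFlow P μ0 γ d)
    (he : BellmanFlow P μ0 γ e) (hπ : IsPolicy π)
    (heπ : ∀ s a, e s a = (∑ a', e s a') * π s a) :
    ∑ s, ∑ a, |d s a - e s a|
      ≤ 1 / (1 - γ) * ∑ s, ∑ a, |d s a - (∑ a', d s a') * π s a| := by
  set T := ∑ s, ∑ a, |d s a - e s a| with hT
  set E := ∑ s, ∑ a, |d s a - (∑ a', d s a') * π s a| with hE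
  have hmarg : ∑ s, |∑ a, d s a - ∑ a, e s a| ≤ γ * T := by
    have hpt : ∀ s, |∑ a, d s a - ∑ a, e s a|
        ≤ ∑ s', ∑ a', γ * (P s' a' s * |d s' a' - e s' a'|) := by
      intro s
      have h1 : ∑ a, d s a - ∑ a, e s a = ∑ s', ∑ a', γ * (P s' a' s * (d s' a' - e s' a')) := by
        rw [hd s, he s]
        simp only [mul_sub, Finset.sum_sub_distrib, Finset.mul_sum]
        ring
      rw [h1]
      refine (Finset.abs_sum_le_sum_abs _ _).trans (Finset.sum_le_sum fun s' _ => ?_)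
      refine (Finset.abs_sum_le_sum_abs _ _).trans (Finset.sum_le_sum fun a' _ => ?_)
      rw [abs_mul, abs_mul, abs_of_nonneg hγ0, abs_of_nonneg (hP _ _ _)]
    refine (Finset.sum_le_sum fun s _ => hpt s).trans (le_of_eq ?_)
    rw [Finset.sum_comm, hT, Finset.mul_sum]
    refine Finset.sum_congr rfl fun s' _ => ?_
    rw [Finset.sum_comm, Finset.mul_sum]
    refine Finset.sum_congr rfl fun a' _ => ?_
    rw [← Finset.mul_sum, ← Finset.sum_mul, hP1, one_mul]
  have hsplit : T ≤ E + ∑ s, |∑ a, d s a - ∑ a, e s a| := by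
    rw [hT, hE, ← Finset.sum_add_distrib]
    refine Finset.sum_le_sum fun s _ => ?_
    have : |∑ a, d s a - ∑ a, e s a| = ∑ a, |∑ a, d s a - ∑ a, e s a| * π s a := by
      rw [← Finset.mul_sum, hπ.2 s, mul_one]
    rw [this, ← Finset.sum_add_distrib]
    refine Finset.sum_le_sum fun a _ => ?_
    have h2 : d s a - e s a
        = (d s a - (∑ a', d s a') * π s a) + (∑ a, d s a - ∑ a, e s a) * π s a := by
      rw [heπ s a]; ring
    rw [h2]
    refine (abs_add_le _ _).trans (le_of_eq ?_)
    rw [abs_mul _ (π s a), abs_of_nonneg (hπ.1 s a)]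
  rw [one_div, ← div_eq_inv_mul, le_div_iff₀ (by linarith)]
  linarith

section Occupancy

variable {P : S → A → S → ℝ} {μ0 : S → ℝ} {γ : ℝ} {π : S → A → ℝ}

theorem saDist_nonneg (hP : ∀ s a s', 0 ≤ P s a s') (hμ : ∀ s, 0 ≤ μ0 s) (hπ : IsPolicy π)
    (t : ℕ) (s : S) (a : A) : 0 ≤ saDist P μ0 π t s a := by
  induction t generalizing s a with
  | zero => exact mul_nonneg (hμ s) (hπ.1 s a)
  | succ t ih =>
    exact mul_nonneg (Finset.sum_nonneg fun s' _ => Finset.sum_nonneg fun a' _ =>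
      mul_nonneg (ih s' a') (hP _ _ _)) (hπ.1 s a)

theorem saDist_sum (hP1 : ∀ s a, ∑ s', P s a s' = 1) (hμ1 : ∑ s, μ0 s = 1) (hπ : IsPolicy π)
    (t : ℕ) : ∑ s, ∑ a, saDist P μ0 π t s a = 1 := by
  induction t with
  | zero => simp only [saDist, ← Finset.mul_sum, hπ.2, mul_one, hμ1]
  | succ t ih =>
    simp only [saDist, ← Finset.mul_sum, hπ.2, mul_one]
    rw [Finset.sum_comm, ← ih]
    refine Finset.sum_congr rfl fun s' _ => ?_
    rw [Finset.sum_comm]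
    refine Finset.sum_congr rfl fun a' _ => ?_
    rw [← Finset.mul_sum, hP1, mul_one]

theorem saDist_summable (hP : ∀ s a s', 0 ≤ P s a s') (hP1 : ∀ s a, ∑ s', P s a s' = 1)
    (hγ0 : 0 ≤ γ) (hγ1 : γ < 1) (hμ : ∀ s, 0 ≤ μ0 s) (hμ1 : ∑ s, μ0 s = 1) (hπ : IsPolicy π)
    (s : S) (a : A) : Summable fun t => γ ^ t * saDist P μ0 π t s a := by
  refine Summable.of_nonneg_of_le
    (fun t => mul_nonneg (pow_nonneg hγ0 t) (saDist_nonneg hP hμ hπ t s a)) (fun t => ?_)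
    (summable_geometric_of_lt_one hγ0 hγ1)
  refine mul_le_of_le_one_right (pow_nonneg hγ0 t) ?_
  rw [← saDist_sum hP1 hμ1 hπ t]
  refine (Finset.single_le_sum (f := fun a => saDist P μ0 π t s a)
    (fun a _ => saDist_nonneg hP hμ hπ t s a) (Finset.mem_univ a)).trans ?_
  exact Finset.single_le_sum (f := fun s => ∑ a, saDist P μ0 π t s a)
    (fun s _ => Finset.sum_nonneg fun a _ => saDist_nonneg hP hμ hπ t s a) (Finset.mem_univ s)

theorem occ_eq_flow_mul (hP : ∀ s a s', 0 ≤ P s a s') (hP1 : ∀ s a, ∑ s', P s a s' = 1)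
    (hγ0 : 0 ≤ γ) (hγ1 : γ < 1) (hμ : ∀ s, 0 ≤ μ0 s) (hμ1 : ∑ s, μ0 s = 1) (hπ : IsPolicy π)
    (s : S) (a : A) :
    occ P μ0 γ π s a
      = ((1 - γ) * μ0 s + γ * ∑ s', ∑ a', P s' a' s * occ P μ0 γ π s' a') * π s a := by
  have hs := fun s a => saDist_summable (π := π) hP hP1 hγ0 hγ1 hμ hμ1 hπ s a
  have hflow : ∑' t, γ ^ (t + 1) * saDist P μ0 π (t + 1) s a
      = γ * (∑ s', ∑ a', P s' a' s * ∑' t, γ ^ t * saDist P μ0 π t s' a') * π s a := by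
    have hsum : HasSum (fun t => γ * (∑ s', ∑ a', P s' a' s * (γ ^ t * saDist P μ0 π t s' a'))
          * π s a)
        (γ * (∑ s', ∑ a', P s' a' s * ∑' t, γ ^ t * saDist P μ0 π t s' a') * π s a) :=
      ((hasSum_sum fun s' _ => hasSum_sum fun a' _ =>
        (hs s' a').hasSum.mul_left (P s' a' s)).mul_left γ).mul_right (π s a)
    rw [← hsum.tsum_eq]
    refine tsum_congr fun t => ?_
    simp only [saDist, Finset.mul_sum, Finset.sum_mul]
    refine Finset.sum_congr rfl fun s' _ => Finset.sum_congr rfl fun a' _ => ?_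
    ring
  have hocc : ∑ s', ∑ a', P s' a' s * occ P μ0 γ π s' a'
      = (1 - γ) * ∑ s', ∑ a', P s' a' s * ∑' t, γ ^ t * saDist P μ0 π t s' a' := by
    simp only [occ, Finset.mul_sum]
    refine Finset.sum_congr rfl fun s' _ => Finset.sum_congr rfl fun a' _ => ?_
    ring
  rw [hocc, occ, (hs s a).tsum_eq_zero_add, hflow]
  simp only [saDist, pow_zero]
  ring

theorem occ_bellmanFlow (hP : ∀ s a s', 0 ≤ P s a s') (hP1 : ∀ s a, ∑ s', P s a s' = 1)
    (hγ0 : 0 ≤ γ) (hγ1 : γ < 1) (hμ : ∀ s, 0 ≤ μ0 s) (hμ1 : ∑ s, μ0 s = 1) (hπ : IsPolicy π) :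
    BellmanFlow P μ0 γ (occ P μ0 γ π) := by
  intro s
  rw [Finset.sum_congr rfl fun a _ => occ_eq_flow_mul hP hP1 hγ0 hγ1 hμ hμ1 hπ s a,
    ← Finset.mul_sum, hπ.2, mul_one]

theorem occ_eq_marginal_mul (hP : ∀ s a s', 0 ≤ P s a s') (hP1 : ∀ s a, ∑ s', P s a s' = 1)
    (hγ0 : 0 ≤ γ) (hγ1 : γ < 1) (hμ : ∀ s, 0 ≤ μ0 s) (hμ1 : ∑ s, μ0 s = 1) (hπ : IsPolicy π)
    (s : S) (a : A) : occ P μ0 γ π s a = (∑ a', occ P μ0 γ π s a') * π s a := by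
  rw [occ_bellmanFlow hP hP1 hγ0 hγ1 hμ hμ1 hπ s]
  exact occ_eq_flow_mul hP hP1 hγ0 hγ1 hμ hμ1 hπ s a

end Occupancy

theorem normPolicy_isPolicy [Nonempty A] {d : S → A → ℝ} (hd : ∀ s a, 0 ≤ d s a) :
    IsPolicy (normPolicy d) := by
  refine ⟨fun s a => ?_, fun s => ?_⟩
  · unfold normPolicy
    split_ifs with h
    · exact div_nonneg (hd s a) h.le
    · positivity
  · unfold normPolicy
    split_ifs with h
    · rw [← Finset.sum_div, div_self h.ne']
    · simp

theorem extractPolicy_eq_normPolicy (piD w : S → A → ℝ) :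
    extractPolicy piD w = normPolicy fun s a => w s a * piD s a := rfl

theorem marginal_mul_normPolicy {d : S → A → ℝ} (hd : ∀ s a, 0 ≤ d s a) (s : S) (a : A) :
    (∑ a', d s a') * normPolicy d s a = d s a := by
  unfold normPolicy
  split_ifs with h
  · rw [mul_div_cancel₀ _ h.ne']
  · have h0 : ∑ a', d s a' = 0 := le_antisymm (not_lt.1 h) (Finset.sum_nonneg fun a _ => hd s a)
    rw [h0, zero_mul]
    exact ((Finset.sum_eq_zero_iff_of_nonneg fun a _ => hd s a).1 h0 a (Finset.mem_univ a)).symm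

theorem expL1_normPolicy_eq {d : S → A → ℝ} (hd : ∀ s a, 0 ≤ d s a) (π : S → A → ℝ) :
    expL1 d (normPolicy d) π = ∑ s, ∑ a, |d s a - (∑ a', d s a') * π s a| := by
  unfold expL1 l1Pol
  refine Finset.sum_congr rfl fun s _ => ?_
  rw [Finset.mul_sum]
  refine Finset.sum_congr rfl fun a _ => ?_
  have h0 : 0 ≤ ∑ a', d s a' := Finset.sum_nonneg fun a _ => hd s a
  calc (∑ a', d s a') * |normPolicy d s a - π s a|
      = |(∑ a', d s a') * (normPolicy d s a - π s a)| := by rw [abs_mul, abs_of_nonneg h0]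
    _ = _ := by rw [mul_sub, marginal_mul_normPolicy hd]

/-- A Bellman flow is the occupancy of the policy it induces. -/
theorem BellmanFlow.eq_occ [Nonempty A] {P : S → A → S → ℝ} {μ0 : S → ℝ} {γ : ℝ}
    (hP : ∀ s a s', 0 ≤ P s a s') (hP1 : ∀ s a, ∑ s', P s a s' = 1)
    (hγ0 : 0 ≤ γ) (hγ1 : γ < 1) (hμ : ∀ s, 0 ≤ μ0 s) (hμ1 : ∑ s, μ0 s = 1) {d : S → A → ℝ}
    (hd0 : ∀ s a, 0 ≤ d s a) (hd : BellmanFlow P μ0 γ d) (s : S) (a : A) :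
    occ P μ0 γ (normPolicy d) s a = d s a := by
  have hπ := normPolicy_isPolicy hd0
  have h := hd.sum_abs_sub_le hP hP1 hγ0 hγ1 (occ_bellmanFlow hP hP1 hγ0 hγ1 hμ hμ1 hπ) hπ
    (occ_eq_marginal_mul hP hP1 hγ0 hγ1 hμ hμ1 hπ)
  simp only [marginal_mul_normPolicy hd0, sub_self, abs_zero, Finset.sum_const_zero,
    mul_zero] at h
  have h1 := (Finset.sum_eq_zero_iff_of_nonneg
    (fun s _ => Finset.sum_nonneg fun a _ => abs_nonneg _)).1
    (le_antisymm h (Finset.sum_nonneg fun s _ => Finset.sum_nonneg fun a _ => abs_nonneg _))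
    s (Finset.mem_univ s)
  have h2 := (Finset.sum_eq_zero_iff_of_nonneg fun a _ => abs_nonneg _).1 h1 a (Finset.mem_univ a)
  linarith [abs_eq_zero.1 h2]

/-- The return gap is controlled by the policy gap weighted by the reference occupancy. -/
theorem Jret_sub_le_expL1 [Nonempty A] {P : S → A → S → ℝ} {r : S → A → ℝ} {μ0 : S → ℝ} {γ : ℝ}
    {dD : S → A → ℝ} (h : MDPAssumptions P r μ0 γ dD) {d π : S → A → ℝ}
    (hd0 : ∀ s a, 0 ≤ d s a) (hd : BellmanFlow P μ0 γ d) (hπ : IsPolicy π) :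
    Jret P r μ0 γ (normPolicy d) - Jret P r μ0 γ π
      ≤ 1 / (1 - γ) * expL1 d (normPolicy d) π := by
  have hμ : ∀ s, 0 ≤ μ0 s := fun s => (h.μ0_pos s).le
  rw [expL1_normPolicy_eq hd0]
  refine le_trans ?_ (hd.sum_abs_sub_le h.P_nonneg h.P_sum h.γ_nonneg h.γ_lt_one
    (occ_bellmanFlow h.P_nonneg h.P_sum h.γ_nonneg h.γ_lt_one hμ h.μ0_sum hπ) hπ
    (occ_eq_marginal_mul h.P_nonneg h.P_sum h.γ_nonneg h.γ_lt_one hμ h.μ0_sum hπ))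
  unfold Jret
  simp only [hd.eq_occ h.P_nonneg h.P_sum h.γ_nonneg h.γ_lt_one hμ h.μ0_sum hd0]
  rw [← Finset.sum_sub_distrib]
  refine Finset.sum_le_sum fun s _ => ?_
  rw [← Finset.sum_sub_distrib]
  refine Finset.sum_le_sum fun a _ => ?_
  rw [← sub_mul]
  calc _ ≤ |d s a - occ P μ0 γ π s a| * r s a :=
        mul_le_mul_of_nonneg_right (le_abs_self _) (h.r_nonneg s a)
    _ ≤ _ := mul_le_of_le_one_right (abs_nonneg _) (h.r_le_one s a)

/-- Renormalizing `e` in the state `s` moves it away from `d` by at most a factor two. -/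
theorem sum_abs_sub_marginal_mul_normPolicy_le [Nonempty A] {d e : S → A → ℝ}
    (he : ∀ s a, 0 ≤ e s a) (s : S) :
    ∑ a, |d s a - (∑ a', d s a') * normPolicy e s a| ≤ 2 * ∑ a, |d s a - e s a| := by
  have hπ := normPolicy_isPolicy he
  have hmarg : |∑ a, e s a - ∑ a, d s a| ≤ ∑ a, |d s a - e s a| := by
    rw [← Finset.sum_sub_distrib]
    refine (Finset.abs_sum_le_sum_abs _ _).trans (le_of_eq ?_)
    exact Finset.sum_congr rfl fun a _ => abs_sub_comm _ _
  have hpt : ∑ a, |d s a - (∑ a', d s a') * normPolicy e s a|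
      ≤ ∑ a, (|d s a - e s a| + |∑ a, e s a - ∑ a, d s a| * normPolicy e s a) := by
    refine Finset.sum_le_sum fun a _ => ?_
    have h2 : d s a - (∑ a', d s a') * normPolicy e s a
        = (d s a - e s a) + (∑ a, e s a - ∑ a, d s a) * normPolicy e s a := by
      rw [sub_mul, marginal_mul_normPolicy he]; ring
    rw [h2]
    refine (abs_add_le _ _).trans (le_of_eq ?_)
    rw [abs_mul _ (normPolicy e s a), abs_of_nonneg (hπ.1 s a)]
  rw [Finset.sum_add_distrib, ← Finset.mul_sum, hπ.2, mul_one] at hpt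
  linarith

theorem extractPolicy_behPolicy_eq {dD : S → A → ℝ} (hdD : ∀ s a, 0 ≤ dD s a) (w : S → A → ℝ)
    {s : S} (hs : 0 < ∑ a, dD s a) (a : A) :
    extractPolicy (behPolicy dD) w s a = normPolicy (dstar dD w) s a := by
  have hsum : ∑ a', dstar dD w s a'
      = (∑ a', dD s a') * ∑ a', w s a' * behPolicy dD s a' := by
    rw [Finset.mul_sum]
    refine Finset.sum_congr rfl fun a' _ => ?_
    rw [dstar, behPolicy, mul_left_comm, marginal_mul_normPolicy hdD]
  have hterm : dstar dD w s a = (∑ a', dD s a') * (w s a * behPolicy dD s a) := by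
    rw [dstar, behPolicy, mul_left_comm, marginal_mul_normPolicy hdD]
  unfold extractPolicy normPolicy
  rw [hsum, hterm, mul_div_mul_left _ _ hs.ne']
  simp only [mul_pos_iff_of_pos_left hs]

theorem expL1_extractPolicy_le [Nonempty A] {dD : S → A → ℝ} (hdD : ∀ s a, 0 ≤ dD s a)
    (hdD1 : ∑ s, ∑ a, dD s a = 1) {w u : S → A → ℝ} (hw : ∀ s a, 0 ≤ w s a)
    (hu : ∀ s a, 0 ≤ u s a) :
    expL1 (dstar dD w) (normPolicy (dstar dD w)) (extractPolicy (behPolicy dD) u)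
      ≤ 2 * l2nrm dD (fun s a => u s a - w s a) := by
  have hdw : ∀ s a, 0 ≤ dstar dD w s a := fun s a => mul_nonneg (hw s a) (hdD s a)
  have hdu : ∀ s a, 0 ≤ dstar dD u s a := fun s a => mul_nonneg (hu s a) (hdD s a)
  have hL1 : expL1 (dstar dD w) (normPolicy (dstar dD w)) (extractPolicy (behPolicy dD) u)
      ≤ 2 * ∑ s, ∑ a, dD s a * |u s a - w s a| := by
    rw [expL1_normPolicy_eq hdw, Finset.mul_sum]
    refine Finset.sum_le_sum fun s _ => ?_
    have hR : ∑ a, dD s a * |u s a - w s a| = ∑ a, |dstar dD w s a - dstar dD u s a| := by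
      refine Finset.sum_congr rfl fun a _ => ?_
      rw [dstar, dstar, ← sub_mul, abs_mul, abs_of_nonneg (hdD s a), abs_sub_comm, mul_comm]
    rw [hR]
    rcases (Finset.sum_nonneg fun a (_ : a ∈ Finset.univ) => hdD s a).eq_or_lt with h0 | hpos
    · have hz : ∀ a, dD s a = 0 := fun a =>
        (Finset.sum_eq_zero_iff_of_nonneg fun a _ => hdD s a).1 h0.symm a (Finset.mem_univ a)
      simp [dstar, hz]
    · simp only [extractPolicy_behPolicy_eq hdD u hpos]
      exact sum_abs_sub_marginal_mul_normPolicy_le hdu s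
  have hJensen : ∑ s, ∑ a, dD s a * |u s a - w s a| ≤ l2nrm dD (fun s a => u s a - w s a) := by
    unfold l2nrm
    refine Real.le_sqrt_of_sq_le ?_
    simp only [← Fintype.sum_prod_type' (f := fun s a => dD s a * |u s a - w s a|),
      ← Fintype.sum_prod_type' (f := fun s a => dD s a * (u s a - w s a) ^ 2)]
    have hcs := Finset.sum_sq_le_sum_mul_sum_of_sq_le_mul (Finset.univ : Finset (S × A))
      (r := fun x => dD x.1 x.2 * |u x.1 x.2 - w x.1 x.2|) (f := fun x => dD x.1 x.2)
      (g := fun x => dD x.1 x.2 * (u x.1 x.2 - w x.1 x.2) ^ 2) (fun x _ => hdD _ _)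
      (fun x _ => mul_nonneg (hdD _ _) (sq_nonneg _))
      (fun x _ => by rw [mul_pow, sq_abs]; exact le_of_eq (by ring))
    rwa [Fintype.sum_prod_type' (f := fun s a => dD s a), hdD1, one_mul] at hcs
  linarith

theorem Lag_eq_sum_flow (P : S → A → S → ℝ) (r : S → A → ℝ) (μ0 : S → ℝ) (γ : ℝ)
    (dD : S → A → ℝ) (f : ℝ → ℝ) (α : ℝ) (v : S → ℝ) (w : S → A → ℝ) :
    Lag P r μ0 γ dD f α v w
      = ∑ s, v s * ((1 - γ) * μ0 s + γ * ∑ s', ∑ a', P s' a' s * dstar dD w s' a'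
          - ∑ a, dstar dD w s a)
        + (∑ s, ∑ a, dstar dD w s a * r s a - α * ∑ s, ∑ a, dD s a * f (w s a)) := by
  have hswap : ∑ s, ∑ a, dD s a * (w s a * (γ * ∑ s', P s a s' * v s'))
      = ∑ s, v s * (γ * ∑ s', ∑ a', P s' a' s * dstar dD w s' a') := by
    simp only [Finset.mul_sum, dstar]
    rw [Finset.sum_congr rfl fun s _ => Finset.sum_comm, Finset.sum_comm]
    refine Finset.sum_congr rfl fun s' _ => Finset.sum_congr rfl fun s _ =>
      Finset.sum_congr rfl fun a _ => ?_
    ring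
  have hexp : ∑ s, ∑ a, dD s a * (w s a * eV P r γ v s a)
      = ∑ s, ∑ a, dstar dD w s a * r s a
        + ∑ s, ∑ a, dD s a * (w s a * (γ * ∑ s', P s a s' * v s'))
        - ∑ s, v s * ∑ a, dstar dD w s a := by
    rw [← Finset.sum_add_distrib, ← Finset.sum_sub_distrib]
    refine Finset.sum_congr rfl fun s _ => ?_
    rw [← Finset.sum_add_distrib, Finset.mul_sum, ← Finset.sum_sub_distrib]
    refine Finset.sum_congr rfl fun a _ => ?_
    simp only [eV, dstar]
    ring
  have hinit : (1 - γ) * ∑ s, μ0 s * v s = ∑ s, v s * ((1 - γ) * μ0 s) := by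
    rw [Finset.mul_sum]
    exact Finset.sum_congr rfl fun s _ => by ring
  rw [Lag, hexp, hswap, hinit]
  simp only [mul_sub, mul_add, Finset.sum_sub_distrib, Finset.sum_add_distrib]
  ring

/-- Stationarity of the Lagrangian in `v` is the Bellman flow equation. -/
theorem IsSaddle.bellmanFlow {P : S → A → S → ℝ} {r : S → A → ℝ} {μ0 : S → ℝ} {γ : ℝ}
    {dD : S → A → ℝ} {f : ℝ → ℝ} {α : ℝ} {v : S → ℝ} {w : S → A → ℝ}
    (h : IsSaddle P r μ0 γ dD f α v w) : BellmanFlow P μ0 γ (dstar dD w) := by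
  set c : S → ℝ := fun s => (1 - γ) * μ0 s + γ * ∑ s', ∑ a', P s' a' s * dstar dD w s' a'
          - ∑ a, dstar dD w s a with hc
  have h1 := h.2.1 (fun s => v s - c s)
  rw [Lag_eq_sum_flow, Lag_eq_sum_flow] at h1
  have h2 : ∑ s, c s ^ 2 ≤ 0 := by
    have : ∑ s, (v s - c s) * c s = ∑ s, v s * c s - ∑ s, c s ^ 2 := by
      rw [← Finset.sum_sub_distrib]
      exact Finset.sum_congr rfl fun s _ => by ring
    simp only [hc] at this h1 ⊢
    linarith
  intro s
  have h3 := (Finset.sum_eq_zero_iff_of_nonneg fun s _ => sq_nonneg (c s)).1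
    (le_antisymm h2 (Finset.sum_nonneg fun s _ => sq_nonneg (c s))) s (Finset.mem_univ s)
  have h4 : c s = 0 := by simpa using h3
  simp only [hc] at h4
  linarith

/-- Quadratic growth of the Lagrangian around its maximizer in `w`. -/
theorem IsSaddle.quadratic_growth {P : S → A → S → ℝ} {r : S → A → ℝ} {μ0 : S → ℝ} {γ : ℝ}
    {dD : S → A → ℝ} {f : ℝ → ℝ} {α M : ℝ} {v : S → ℝ} {w : S → A → ℝ}
    (hdD : ∀ s a, 0 ≤ dD s a) (hα : 0 ≤ α) (hf : StrongConvexOn Set.univ M f)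
    (h : IsSaddle P r μ0 γ dD f α v w) {u : S → A → ℝ} (hu : ∀ s a, 0 ≤ u s a) :
    α * (M / 2) * ∑ s, ∑ a, dD s a * (u s a - w s a) ^ 2
      ≤ Lag P r μ0 γ dD f α v w - Lag P r μ0 γ dD f α v u := by
  set Q := ∑ s, ∑ a, dD s a * (u s a - w s a) ^ 2 with hQ
  have key : ∀ t : ℝ, 0 < t → t < 1 → (1 - t) * (α * (M / 2) * Q)
      ≤ Lag P r μ0 γ dD f α v w - Lag P r μ0 γ dD f α v u := by
    intro t ht0 ht1
    have hmax := h.2.2 (fun s a => (1 - t) * w s a + t * u s a) fun s a =>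
      add_nonneg (mul_nonneg (by linarith) (h.1 s a)) (mul_nonneg ht0.le (hu s a))
    have hconv : ∑ s, ∑ a, dD s a * f ((1 - t) * w s a + t * u s a)
        ≤ (1 - t) * ∑ s, ∑ a, dD s a * f (w s a) + t * ∑ s, ∑ a, dD s a * f (u s a)
          - t * (1 - t) * (M / 2) * Q := by
      rw [hQ]
      simp only [Finset.mul_sum, ← Finset.sum_add_distrib, ← Finset.sum_sub_distrib]
      refine Finset.sum_le_sum fun s _ => Finset.sum_le_sum fun a _ => ?_
      have h1 := hf.2 (Set.mem_univ (w s a)) (Set.mem_univ (u s a))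
        (by linarith : 0 ≤ 1 - t) ht0.le (by ring)
      simp only [smul_eq_mul, Real.norm_eq_abs, sq_abs] at h1
      have h2 := mul_le_mul_of_nonneg_left h1 (hdD s a)
      refine h2.trans (le_of_eq ?_)
      ring
    have hlin : ∑ s, ∑ a, dD s a * (((1 - t) * w s a + t * u s a) * eV P r γ v s a)
        = (1 - t) * ∑ s, ∑ a, dD s a * (w s a * eV P r γ v s a)
          + t * ∑ s, ∑ a, dD s a * (u s a * eV P r γ v s a) := by
      simp only [Finset.mul_sum, ← Finset.sum_add_distrib]
      refine Finset.sum_congr rfl fun s _ => Finset.sum_congr rfl fun a _ => ?_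
      ring
    have hαconv := mul_le_mul_of_nonneg_left hconv hα
    simp only [Lag] at hmax ⊢
    rw [hlin] at hmax
    refine le_of_mul_le_mul_left ?_ ht0
    linarith
  have hlim : Filter.Tendsto (fun t : ℝ => (1 - t) * (α * (M / 2) * Q)) (nhdsWithin 0 (Set.Ioi 0))
      (nhds ((1 - 0) * (α * (M / 2) * Q))) :=
    (Continuous.tendsto (by fun_prop) 0).mono_left nhdsWithin_le_nhds
  rw [sub_zero, one_mul] at hlim
  refine le_of_tendsto hlim ?_
  filter_upwards [Ioo_mem_nhdsGT one_pos] with t ht using key t ht.1 ht.2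

section Concentration

variable {X : Type*} [Fintype X] [MeasurableSpace X] [MeasurableSingletonClass X] {p : X → ℝ}

theorem discMeasure_isProbabilityMeasure (hp : ∀ x, 0 ≤ p x) (hp1 : ∑ x, p x = 1) :
    IsProbabilityMeasure (discMeasure p) := by
  constructor
  rw [discMeasure, Measure.sum_fintype]
  simp only [Measure.coe_finsetSum, Finset.sum_apply, Measure.smul_apply, smul_eq_mul,
    measure_univ, mul_one]
  rw [← ENNReal.ofReal_sum_of_nonneg fun x _ => hp x, hp1, ENNReal.ofReal_one]

theorem integral_discMeasure (hp : ∀ x, 0 ≤ p x) (g : X → ℝ) :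
    ∫ x, g x ∂(discMeasure p) = ∑ x, p x * g x := by
  rw [discMeasure, Measure.sum_fintype, integral_finsetSum_measure]
  · refine Finset.sum_congr rfl fun x _ => ?_
    rw [integral_smul_measure, integral_dirac, ENNReal.toReal_ofReal (hp x), smul_eq_mul]
  · intro x _
    exact (integrable_dirac (by simp)).smul_measure ENNReal.ofReal_ne_top

/-- One-sided Hoeffding inequality for the empirical mean of a bounded function. -/
theorem discMeasure_mean_sub_gt_le (hp : ∀ x, 0 ≤ p x) (hp1 : ∑ x, p x = 1) {g : X → ℝ} {B : ℝ}
    (hg : ∀ x, |g x| ≤ B) {n : ℕ} (hn : 0 < n) {η : ℝ} (hη0 : 0 < η) (hη1 : η ≤ 1) :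
    (Measure.pi fun _ : Fin n => discMeasure p)
        {D | B * √(2 * Real.log (1 / η) / n) < (n : ℝ)⁻¹ * ∑ i, g (D i) - ∑ x, p x * g x}
      ≤ ENNReal.ofReal η := by
  have := discMeasure_isProbabilityMeasure hp hp1
  have hn' : (0 : ℝ) < n := by exact_mod_cast hn
  have hlog : 0 ≤ Real.log (1 / η) := Real.log_nonneg (by rw [le_div_iff₀ hη0]; linarith)
  obtain ⟨x0⟩ : Nonempty X := by
    by_contra hX
    rw [not_nonempty_iff] at hX
    simp at hp1
  rcases ((abs_nonneg _).trans (hg x0)).eq_or_lt with hB | hB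
  · have hg0 : ∀ x, g x = 0 := fun x => abs_nonpos_iff.1 (hB ▸ hg x)
    simp [hg0, ← hB]
  set ν := Measure.pi fun _ : Fin n => discMeasure p
  set m := ∑ x, p x * g x with hm
  have hsub : ∀ i : Fin n, ProbabilityTheory.HasSubgaussianMGF
      (fun D : Fin n → X => g (D i) - m) ((‖B - -B‖₊ / 2) ^ 2) ν := by
    intro i
    have h0 := ProbabilityTheory.hasSubgaussianMGF_of_mem_Icc (μ := discMeasure p) (X := g)
      (a := -B) (b := B) (measurable_of_finite g).aemeasurable
      (Filter.Eventually.of_forall fun x => abs_le.1 (hg x))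
    rw [integral_discMeasure hp] at h0
    have hmp := measurePreserving_eval (fun _ : Fin n => discMeasure p) i
    rw [← hmp.map_eq] at h0
    exact h0.of_map hmp.measurable.aemeasurable
  have hind : ProbabilityTheory.iIndepFun (fun (i : Fin n) (D : Fin n → X) => g (D i) - m) ν :=
    ProbabilityTheory.iIndepFun_pi (X := fun _ x => g x - m)
      fun _ => (measurable_of_finite _).aemeasurable
  set t := B * √(2 * Real.log (1 / η) / n) with ht
  have ht0 : 0 ≤ t := by positivity
  have hH := ProbabilityTheory.HasSubgaussianMGF.measure_sum_ge_le_of_iIndepFun hind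
    (s := Finset.univ) (fun i _ => hsub i) (ε := n * t) (by positivity)
  have hexp : Real.exp (-(n * t) ^ 2 / (2 * ∑ i ∈ (Finset.univ : Finset (Fin n)),
      (((‖B - -B‖₊ / 2) ^ 2 : NNReal) : ℝ))) = η := by
    have hc : (((‖B - -B‖₊ / 2) ^ 2 : NNReal) : ℝ) = B ^ 2 := by
      push_cast
      rw [Real.norm_eq_abs, abs_of_nonneg (by linarith)]
      ring
    have ht2 : t ^ 2 = B ^ 2 * (2 * Real.log (1 / η) / n) := by
      rw [ht, mul_pow, Real.sq_sqrt (by positivity)]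
    rw [hc, Finset.sum_const, Finset.card_univ, Fintype.card_fin, nsmul_eq_mul, mul_pow, ht2]
    have : -((n : ℝ) ^ 2 * (B ^ 2 * (2 * Real.log (1 / η) / n))) / (2 * (n * B ^ 2))
        = Real.log η := by
      rw [one_div, Real.log_inv]
      field_simp
    rw [this, Real.exp_log hη0]
  rw [NNReal.coe_sum, hexp] at hH
  calc _ ≤ ν {D | n * t ≤ ∑ i, (g (D i) - m)} := by
        refine measure_mono fun D hD => ?_
        simp only [Set.mem_ofPred_eq] at hD ⊢
        rw [Finset.sum_sub_distrib, Finset.sum_const, Finset.card_univ, Fintype.card_fin,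
          nsmul_eq_mul]
        have := mul_lt_mul_of_pos_left hD hn'
        rw [mul_sub, mul_inv_cancel_left₀ hn'.ne'] at this
        exact this.le
    _ ≤ ENNReal.ofReal η := by
        rw [← ofReal_measureReal]
        exact ENNReal.ofReal_le_ofReal hH

/-- Two-sided Hoeffding inequality for the empirical mean of a bounded function. -/
theorem discMeasure_abs_mean_sub_gt_le (hp : ∀ x, 0 ≤ p x) (hp1 : ∑ x, p x = 1) {g : X → ℝ}
    {B : ℝ} (hg : ∀ x, |g x| ≤ B) {n : ℕ} (hn : 0 < n) {η : ℝ} (hη0 : 0 < η) (hη1 : η ≤ 1) :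
    (Measure.pi fun _ : Fin n => discMeasure p)
        {D | B * √(2 * Real.log (2 / η) / n) < |(n : ℝ)⁻¹ * ∑ i, g (D i) - ∑ x, p x * g x|}
      ≤ ENNReal.ofReal η := by
  have hη : 1 / (η / 2) = 2 / η := by field_simp
  have h1 := discMeasure_mean_sub_gt_le hp hp1 hg hn (half_pos hη0) (by linarith)
  have h2 := discMeasure_mean_sub_gt_le hp hp1 (g := fun x => -g x) (by simpa using hg) hn
    (half_pos hη0) (by linarith)
  rw [hη] at h1 h2
  have hadd : ENNReal.ofReal η = ENNReal.ofReal (η / 2) + ENNReal.ofReal (η / 2) := by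
    rw [← ENNReal.ofReal_add (by positivity) (by positivity), add_halves]
  rw [hadd]
  refine le_trans (measure_mono fun D hD => ?_) ((measure_union_le _ _).trans (add_le_add h1 h2))
  rw [Set.mem_ofPred_eq] at hD
  rcases lt_abs.1 hD with h | h
  · exact Or.inl h
  · refine Or.inr ?_
    simp only [Set.mem_ofPred_eq, Finset.sum_neg_distrib, mul_neg]
    linarith

/-- Hoeffding inequality uniformly over a finite family of bounded functions. -/
theorem discMeasure_exists_abs_mean_sub_gt_le (hp : ∀ x, 0 ≤ p x) (hp1 : ∑ x, p x = 1)
    {ι : Type*} {F : Finset ι} (hF : F.Nonempty) {g : ι → X → ℝ} {B : ℝ}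
    (hg : ∀ k ∈ F, ∀ x, |g k x| ≤ B) {n : ℕ} (hn : 0 < n) {η : ℝ} (hη0 : 0 < η) (hη1 : η ≤ 1) :
    (Measure.pi fun _ : Fin n => discMeasure p)
        {D | ∃ k ∈ F, B * √(2 * Real.log (2 * F.card / η) / n)
          < |(n : ℝ)⁻¹ * ∑ i, g k (D i) - ∑ x, p x * g k x|}
      ≤ ENNReal.ofReal η := by
  have hF1 : (1 : ℝ) ≤ F.card := by exact_mod_cast hF.card_pos
  have hF0 : (0 : ℝ) < F.card := by linarith
  have hη : 2 / (η / F.card) = 2 * F.card / η := by field_simp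
  have hset : {D : Fin n → X | ∃ k ∈ F, B * √(2 * Real.log (2 * F.card / η) / n)
          < |(n : ℝ)⁻¹ * ∑ i, g k (D i) - ∑ x, p x * g k x|}
      = ⋃ k ∈ F, {D | B * √(2 * Real.log (2 * F.card / η) / n)
          < |(n : ℝ)⁻¹ * ∑ i, g k (D i) - ∑ x, p x * g k x|} := by
    ext D; simp
  rw [hset]
  refine (measure_biUnion_finset_le _ _).trans ?_
  calc _ ≤ ∑ _k ∈ F, ENNReal.ofReal (η / F.card) := by
        refine Finset.sum_le_sum fun k hk => ?_
        have := discMeasure_abs_mean_sub_gt_le hp hp1 (hg k hk) hn (η := η / F.card)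
          (by positivity) ((div_le_self hη0.le hF1).trans hη1)
        rwa [hη] at this
    _ = ENNReal.ofReal η := by
        rw [Finset.sum_const, nsmul_eq_mul, ← ENNReal.ofReal_natCast,
          ← ENNReal.ofReal_mul hF0.le, mul_div_cancel₀ _ hF0.ne']

end Concentration

/-- The contribution of one transition to the empirical Lagrangian. -/
noncomputable def transitionLoss (r : S → A → ℝ) (γ : ℝ) (f : ℝ → ℝ) (α : ℝ) (v : S → ℝ)
    (w : S → A → ℝ) (x : (S × A) × S) : ℝ :=
  -(α * f (w x.1.1 x.1.2)) + w x.1.1 x.1.2 * (r x.1.1 x.1.2 + γ * v x.2 - v x.1.1)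

theorem abs_transitionLoss_le {r : S → A → ℝ} {γ : ℝ} {f : ℝ → ℝ} {α : ℝ} {v : S → ℝ}
    {w : S → A → ℝ} {Bv Bf Bw : ℝ} (hr0 : ∀ s a, 0 ≤ r s a) (hr1 : ∀ s a, r s a ≤ 1)
    (hγ : 0 ≤ γ) (hα : 0 ≤ α) (hv : ∀ s, |v s| ≤ Bv) (hw : ∀ s a, 0 ≤ w s a ∧ w s a ≤ Bw)
    (hf : ∀ x, 0 ≤ x → x ≤ Bw → |f x| ≤ Bf) (x : (S × A) × S) :
    |transitionLoss r γ f α v w x| ≤ α * Bf + Bw * ((1 + γ) * Bv + 1) := by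
  obtain ⟨hw0, hw1⟩ := hw x.1.1 x.1.2
  have hres : |r x.1.1 x.1.2 + γ * v x.2 - v x.1.1| ≤ (1 + γ) * Bv + 1 := by
    have h1 := abs_le.1 (hv x.2)
    have h2 := abs_le.1 (hv x.1.1)
    have h3 := mul_le_mul_of_nonneg_left h1.1 hγ
    have h4 := mul_le_mul_of_nonneg_left h1.2 hγ
    have h5 := hr0 x.1.1 x.1.2
    have h6 := hr1 x.1.1 x.1.2
    rw [abs_le]
    constructor <;> linarith
  refine (abs_add_le _ _).trans (add_le_add ?_ ?_)
  · rw [abs_neg, abs_mul, abs_of_nonneg hα]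
    exact mul_le_mul_of_nonneg_left (hf _ hw0 hw1) hα
  · rw [abs_mul, abs_of_nonneg hw0]
    exact mul_le_mul hw1 hres (abs_nonneg _) (hw0.trans hw1)

theorem sum_tupleWeight_mul (P : S → A → S → ℝ) (dD : S → A → ℝ) (g : (S × A) × S → ℝ) :
    ∑ x, tupleWeight P dD x * g x = ∑ s, ∑ a, dD s a * ∑ s', P s a s' * g ((s, a), s') := by
  simp only [Fintype.sum_prod_type, tupleWeight, Finset.mul_sum, mul_assoc]

theorem Lag_eq_sum_transitionLoss {P : S → A → S → ℝ} (hP1 : ∀ s a, ∑ s', P s a s' = 1)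
    (r : S → A → ℝ) (μ0 : S → ℝ) (γ : ℝ) (dD : S → A → ℝ) (f : ℝ → ℝ) (α : ℝ) (v : S → ℝ)
    (w : S → A → ℝ) :
    Lag P r μ0 γ dD f α v w
      = (1 - γ) * ∑ s, μ0 s * v s
        + ∑ x, tupleWeight P dD x * transitionLoss r γ f α v w x := by
  have hcond : ∀ s a, ∑ s', P s a s' * transitionLoss r γ f α v w ((s, a), s')
      = -(α * f (w s a)) + w s a * eV P r γ v s a := by
    intro s a
    have : ∀ s', P s a s' * transitionLoss r γ f α v w ((s, a), s')
        = P s a s' * (-(α * f (w s a)) + w s a * (r s a - v s))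
          + w s a * γ * (P s a s' * v s') := fun s' => by
      simp only [transitionLoss]; ring
    rw [Finset.sum_congr rfl fun s' _ => this s', Finset.sum_add_distrib, ← Finset.sum_mul, hP1,
      ← Finset.mul_sum, eV]
    ring
  rw [sum_tupleWeight_mul, Lag]
  simp only [hcond, mul_add, Finset.sum_add_distrib, mul_neg, Finset.sum_neg_distrib,
    mul_left_comm _ α, ← Finset.mul_sum]
  ring

theorem empLag_eq_sum_transitionLoss (r : S → A → ℝ) (γ : ℝ) (f : ℝ → ℝ) (α : ℝ) {n n0 : ℕ}
    (D : Fin n → (S × A) × S) (D0 : Fin n0 → S) (v : S → ℝ) (w : S → A → ℝ) :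
    empLag r γ f α D D0 v w
      = (1 - γ) * ((n0 : ℝ)⁻¹ * ∑ j, v (D0 j))
        + (n : ℝ)⁻¹ * ∑ i, transitionLoss r γ f α v w (D i) := by
  simp only [empLag, transitionLoss, Finset.sum_add_distrib, Finset.sum_neg_distrib,
    ← Finset.mul_sum]
  ring

theorem tupleWeight_nonneg {P : S → A → S → ℝ} {dD : S → A → ℝ}
    (hP : ∀ s a s', 0 ≤ P s a s') (hdD : ∀ s a, 0 ≤ dD s a) (x : (S × A) × S) :
    0 ≤ tupleWeight P dD x := mul_nonneg (hdD _ _) (hP _ _ _)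

theorem tupleWeight_sum {P : S → A → S → ℝ} {dD : S → A → ℝ}
    (hP1 : ∀ s a, ∑ s', P s a s' = 1) (hdD1 : ∑ s, ∑ a, dD s a = 1) :
    ∑ x, tupleWeight P dD x = 1 := by
  simpa [hP1, hdD1] using sum_tupleWeight_mul P dD fun _ => 1

/-- With probability at least `1 - δ`, the empirical and population Lagrangians are
`ε_stat`-close uniformly over `V × W`. -/
theorem one_sub_le_dataMeasure_abs_empLag_sub_Lag_le
    [MeasurableSpace S] [MeasurableSpace A] [MeasurableSingletonClass S]
    [MeasurableSingletonClass A] {P : S → A → S → ℝ} {r : S → A → ℝ} {μ0 : S → ℝ} {γ : ℝ}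
    {dD : S → A → ℝ} (h : MDPAssumptions P r μ0 γ dD) {f : ℝ → ℝ} {α δ Bv Bf Bw : ℝ}
    (hα : 0 ≤ α) (hδ0 : 0 < δ) (hδ1 : δ < 1) {V : Finset (S → ℝ)} {W : Finset (S → A → ℝ)}
    (hV : V.Nonempty) (hW : W.Nonempty) (hVb : ∀ v ∈ V, ∀ s, |v s| ≤ Bv)
    (hWb : ∀ w ∈ W, ∀ s a, 0 ≤ w s a ∧ w s a ≤ Bw)
    (hf : ∀ x, 0 ≤ x → x ≤ Bw → |f x| ≤ Bf) {n n0 : ℕ} (hn : 0 < n) (hn0 : 0 < n0) :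
    1 - ENNReal.ofReal δ ≤ dataMeasure P dD μ0 n n0 {ω | ∀ v ∈ V, ∀ w ∈ W,
      |empLag r γ f α ω.1 ω.2 v w - Lag P r μ0 γ dD f α v w|
        ≤ epsStat γ α Bv Bf Bw ((1 + γ) * Bv + 1) δ V.card W.card n n0} := by
  have hq := tupleWeight_nonneg h.P_nonneg h.dD_nonneg
  have hq1 := tupleWeight_sum h.P_sum h.dD_sum
  have hμ : ∀ s, 0 ≤ μ0 s := fun s => (h.μ0_pos s).le
  have := discMeasure_isProbabilityMeasure hq hq1
  have := discMeasure_isProbabilityMeasure hμ h.μ0_sum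
  have hT := discMeasure_exists_abs_mean_sub_gt_le hq hq1 (hV.product hW)
    (g := fun k => transitionLoss r γ f α k.1 k.2) (B := α * Bf + Bw * ((1 + γ) * Bv + 1))
    (fun k hk => abs_transitionLoss_le h.r_nonneg h.r_le_one h.γ_nonneg hα
      (hVb _ (Finset.mem_product.1 hk).1) (hWb _ (Finset.mem_product.1 hk).2) hf)
    hn (half_pos hδ0) (by linarith)
  have hI := discMeasure_exists_abs_mean_sub_gt_le hμ h.μ0_sum hV (g := fun v => v) hVb
    hn0 (half_pos hδ0) (by linarith)
  have hlogT : 2 * ((V ×ˢ W).card : ℝ) / (δ / 2) = 4 * ((V.card : ℝ) * W.card) / δ := by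
    rw [Finset.card_product]; push_cast; field_simp; ring
  have hlogI : 2 * (V.card : ℝ) / (δ / 2) = 4 * (V.card : ℝ) / δ := by
    field_simp; ring
  rw [hlogT] at hT
  rw [hlogI] at hI
  set badT := {D : Fin n → (S × A) × S | ∃ k ∈ V ×ˢ W, _} with hbadT
  set badI := {D : Fin n0 → S | ∃ k ∈ V, _} with hbadI
  set good := {ω : (Fin n → (S × A) × S) × (Fin n0 → S) | ∀ v ∈ V, ∀ w ∈ W,
      |empLag r γ f α ω.1 ω.2 v w - Lag P r μ0 γ dD f α v w|
        ≤ epsStat γ α Bv Bf Bw ((1 + γ) * Bv + 1) δ V.card W.card n n0}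
  have hcover : (Set.univ : Set ((Fin n → (S × A) × S) × (Fin n0 → S)))
      ⊆ good ∪ (badT ×ˢ Set.univ ∪ Set.univ ×ˢ badI) := by
    rintro ω -
    by_contra hω
    simp only [Set.mem_union, Set.mem_prod, Set.mem_univ, and_true, true_and, not_or] at hω
    obtain ⟨hg, hωT, hωI⟩ := hω
    simp only [hbadT, hbadI, Set.mem_ofPred_eq, not_exists, not_and, not_lt] at hωT hωI
    refine hg fun v hv w hw => ?_
    have h1 := hωT (v, w) (Finset.mk_mem_product hv hw)
    have h2 := mul_le_mul_of_nonneg_left (hωI v hv) (by linarith [h.γ_lt_one] : 0 ≤ 1 - γ)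
    rw [empLag_eq_sum_transitionLoss, Lag_eq_sum_transitionLoss h.P_sum, add_sub_add_comm,
      ← mul_sub]
    refine (abs_add_le _ _).trans (add_le_add ?_ h1)
    rw [abs_mul, abs_of_nonneg (by linarith [h.γ_lt_one] : 0 ≤ 1 - γ), mul_assoc]
    exact h2
  have hbad : dataMeasure P dD μ0 n n0 (badT ×ˢ Set.univ ∪ Set.univ ×ˢ badI)
      ≤ ENNReal.ofReal δ := by
    refine (measure_union_le _ _).trans ?_
    rw [dataMeasure, Measure.prod_prod, Measure.prod_prod, measure_univ, measure_univ, mul_one,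
      one_mul, ← add_halves δ, ENNReal.ofReal_add (by positivity) (by positivity)]
    exact add_le_add hT hI
  have : IsProbabilityMeasure (dataMeasure P dD μ0 n n0) := by
    unfold dataMeasure; infer_instance
  rw [tsub_le_iff_right]
  calc (1 : ℝ≥0∞) = dataMeasure P dD μ0 n n0 Set.univ := measure_univ.symm
    _ ≤ _ := (measure_mono hcover).trans (measure_union_le _ _)
    _ ≤ _ := add_le_add le_rfl hbad

/-- On the event of uniform `ε`-closeness, the output is `2 ε`-optimal in the Lagrangian. -/
theorem IsProRLOutput.Lag_sub_le {P : S → A → S → ℝ} {r : S → A → ℝ} {μ0 : S → ℝ} {γ : ℝ}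
    {dD : S → A → ℝ} {f : ℝ → ℝ} {α ε : ℝ} {V : Finset (S → ℝ)} {W : Finset (S → A → ℝ)}
    {n n0 : ℕ} {D : Fin n → (S × A) × S} {D0 : Fin n0 → S} {vst vhat : S → ℝ}
    {wst what : S → A → ℝ} (hsad : IsSaddle P r μ0 γ dD f α vst wst)
    (hvst : vst ∈ V) (hwst : wst ∈ W) (hout : IsProRLOutput r γ f α V W D D0 vhat what)
    (hε : ∀ v ∈ V, ∀ w ∈ W, |empLag r γ f α D D0 v w - Lag P r μ0 γ dD f α v w| ≤ ε) :
    Lag P r μ0 γ dD f α vst wst - Lag P r μ0 γ dD f α vst what ≤ 2 * ε := by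
  obtain ⟨hvhat, hwhat, hmin, hmax⟩ := hout
  obtain ⟨u, hu, humin⟩ := V.exists_min_image (fun v => empLag r γ f α D D0 v wst) ⟨vst, hvst⟩
  have h1 := hsad.2.1 u
  have h2 := (abs_le.1 (hε u hu wst hwst)).1
  have h3 := hmax wst hwst u hu humin
  have h4 := hmin vst hvst
  have h5 := (abs_le.1 (hε vst hvst what hwhat)).2
  linarith

/-- Theorem 1: sample complexity of learning `π*_α`. -/
theorem stmt0
    {S A : Type*} [Fintype S] [Fintype A] [Nonempty S] [Nonempty A]
    [MeasurableSpace S] [MeasurableSpace A]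
    [MeasurableSingletonClass S] [MeasurableSingletonClass A]
    (P : S → A → S → ℝ) (r : S → A → ℝ) (μ0 : S → ℝ) (γ : ℝ) (dD : S → A → ℝ)
    (hMDP : MDPAssumptions P r μ0 γ dD)
    (f f' : ℝ → ℝ) (α δ : ℝ) (hα : 0 < α) (hδ0 : 0 < δ) (hδ1 : δ < 1)
    (Mf Bw Bf' Bf Bv Be : ℝ)
    (hreg : RegAssumptions f f' Mf Bw Bf' Bf) (hfnn : ∀ x, 0 ≤ f x)
    (hBv : Bv = (α * Bf' + 1) / (1 - γ)) (hBe : Be = (1 + γ) * Bv + 1)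
    (vst : S → ℝ) (wst : S → A → ℝ)
    (hsad : IsSaddle P r μ0 γ dD f α vst wst)
    (V : Finset (S → ℝ)) (W : Finset (S → A → ℝ))
    (hA1 : ∀ s a, dstar dD wst s a ≤ Bw * dD s a)
    (hA2 : vst ∈ V) (hA3 : wst ∈ W)
    (hA4 : ∀ w ∈ W, ∀ s a, 0 ≤ w s a ∧ w s a ≤ Bw)
    (hA6 : ∀ v ∈ V, ∀ s, |v s| ≤ Bv)
    (n n0 : ℕ) (hn : 0 < n) (hn0 : 0 < n0)
    (vhat : (Fin n → (S × A) × S) × (Fin n0 → S) → S → ℝ)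
    (what : (Fin n → (S × A) × S) × (Fin n0 → S) → S → A → ℝ)
    (halg : ∀ ω, IsProRLOutput r γ f α V W ω.1 ω.2 (vhat ω) (what ω)) :
    1 - ENNReal.ofReal δ ≤
      dataMeasure P dD μ0 n n0 {ω |
        Jret P r μ0 γ (normPolicy (dstar dD wst))
            - Jret P r μ0 γ (extractPolicy (behPolicy dD) (what ω))
          ≤ (1 / (1 - γ)) * expL1 (dstar dD wst) (normPolicy (dstar dD wst))
              (extractPolicy (behPolicy dD) (what ω)) ∧
        (1 / (1 - γ)) * expL1 (dstar dD wst) (normPolicy (dstar dD wst))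
            (extractPolicy (behPolicy dD) (what ω))
          ≤ (2 / (1 - γ)) * l2nrm dD (fun s a => what ω s a - wst s a) ∧
        (2 / (1 - γ)) * l2nrm dD (fun s a => what ω s a - wst s a)
          ≤ (4 / (1 - γ)) *
              Real.sqrt (epsStat γ α Bv Bf Bw Be δ V.card W.card n n0 / (α * Mf)) } := by
  have hW0 := hsad.1
  have hγ : 0 < 1 - γ := by linarith [hMDP.γ_lt_one]
  refine (one_sub_le_dataMeasure_abs_empLag_sub_Lag_le hMDP hα.le hδ0 hδ1 ⟨vst, hA2⟩ ⟨wst, hA3⟩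
    hA6 hA4 hreg.f_bdd hn hn0).trans (measure_mono fun ω hω => ?_)
  rw [← hBe] at hω
  have hwhat : ∀ s a, 0 ≤ what ω s a := fun s a => (hA4 _ (halg ω).2.1 s a).1
  have hbeh : ∀ s a, 0 ≤ behPolicy dD s a := (normPolicy_isPolicy hMDP.dD_nonneg).1
  have hMf := hreg.Mf_pos
  refine ⟨?_, ?_, ?_⟩
  · refine Jret_sub_le_expL1 hMDP (fun s a => mul_nonneg (hW0 s a) (hMDP.dD_nonneg s a))
      hsad.bellmanFlow ?_
    rw [extractPolicy_eq_normPolicy]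
    exact normPolicy_isPolicy fun s a => mul_nonneg (hwhat s a) (hbeh s a)
  · calc _ ≤ 1 / (1 - γ) * (2 * l2nrm dD fun s a => what ω s a - wst s a) :=
          mul_le_mul_of_nonneg_left
            (expL1_extractPolicy_le hMDP.dD_nonneg hMDP.dD_sum hW0 hwhat) (by positivity)
      _ = _ := by ring
  · have hgap := (halg ω).Lag_sub_le hsad hA2 hA3 hω
    have hgrow := hsad.quadratic_growth hMDP.dD_nonneg hα.le hreg.strong hwhat
    have hl2 : l2nrm dD (fun s a => what ω s a - wst s a)
        ≤ 2 * √(epsStat γ α Bv Bf Bw Be δ V.card W.card n n0 / (α * Mf)) := by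
      rw [l2nrm, show (2 : ℝ) = √(2 ^ 2) from (Real.sqrt_sq (by norm_num)).symm,
        ← Real.sqrt_mul (by norm_num)]
      refine Real.sqrt_le_sqrt ?_
      rw [← mul_div_assoc, le_div_iff₀ (by positivity)]
      linarith
    calc _ ≤ 2 / (1 - γ) *
          (2 * √(epsStat γ α Bv Bf Bw Be δ V.card W.card n n0 / (α * Mf))) :=
          mul_le_mul_of_nonneg_left hl2 (by positivity)
      _ = _ := by ring
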